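/- arXiv:1410.2700 — 3 statements merged into one kernel-verified Lean document; each statement's English description precedes it below -/
import Mathlib

section
/- The bilateral forward weighted shift T on ℓ²(ℤ) with weights w_n = 2 for n ≥ 0 and w_n = 3 for n < 0 is diskcyclic but not hypercyclic. -/
open Filter Topology Pointwise

/-- The disk orbit of `x` under `T`: `{α • Tⁿ x : n ≥ 0, α ∈ ℂ, |α| ≤ 1}`. -/
def diskOrbit {H : Type*} [NormedAddCommGroup H] [NormedSpace ℂ H]
    (T : H →L[ℂ] H) (x : H) : Set H :=
  {y | ∃ (n : ℕ) (α : ℂ), ‖α‖ ≤ 1 ∧ y = α • (T ^ n) x}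

/-- An operator is diskcyclic if some vector has dense disk orbit. -/
def DiskCyclic {H : Type*} [NormedAddCommGroup H] [NormedSpace ℂ H]
    (T : H →L[ℂ] H) : Prop :=
  ∃ x : H, Dense (diskOrbit T x)

/-- `T` is hypercyclic if some vector has dense orbit. -/
def Hypercyclic {H : Type*} [NormedAddCommGroup H] [NormedSpace ℂ H]
    (T : H →L[ℂ] H) : Prop :=
  ∃ x : H, Dense {y | ∃ n : ℕ, y = (T ^ n) x}

/-- A disk transitive operator on a separable Banach space is diskcyclic. -/
theorem diskCyclic_of_transitive {H : Type*} [NormedAddCommGroup H] [NormedSpace ℂ H]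
    [CompleteSpace H] [TopologicalSpace.SeparableSpace H] (T : H →L[ℂ] H)
    (h : ∀ U V : Set H, IsOpen U → U.Nonempty → IsOpen V → V.Nonempty →
      ∃ x ∈ U, ∃ (n : ℕ) (α : ℂ), ‖α‖ ≤ 1 ∧ α • (T ^ n) x ∈ V) :
    DiskCyclic T := by
  have := UniformSpace.secondCountable_of_separable H
  have hB := TopologicalSpace.isBasis_countableBasis H
  let f : Set H → Set H := fun V =>
    ⋃ (n : ℕ) (α : ℂ) (_ : ‖α‖ ≤ 1), (fun x => α • (T ^ n) x) ⁻¹' V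
  have hd : Dense (⋂ V ∈ TopologicalSpace.countableBasis H, f V) := by
    refine dense_biInter_of_isOpen (fun V hV => ?_)
      (TopologicalSpace.countable_countableBasis H) (fun V hV => ?_)
    · exact isOpen_iUnion fun n => isOpen_iUnion fun α => isOpen_iUnion fun _ =>
        (hB.isOpen hV).preimage ((T ^ n).continuous.const_smul α)
    · rw [dense_iff_inter_open]
      intro U hU hUne
      obtain ⟨x, hxU, n, α, hα, hx⟩ := h U V hU hUne (hB.isOpen hV)
        (TopologicalSpace.nonempty_of_mem_countableBasis hV)
      exact ⟨x, hxU, Set.mem_iUnion₂.2 ⟨n, α, Set.mem_iUnion.2 ⟨hα, hx⟩⟩⟩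
  obtain ⟨x, hx⟩ := hd.nonempty
  refine ⟨x, hB.dense_iff.2 fun V hV _ => ?_⟩
  obtain ⟨n, α, h1⟩ := Set.mem_iUnion₂.1 (Set.mem_iInter₂.1 hx V hV)
  obtain ⟨hα, h2⟩ := Set.mem_iUnion.1 h1
  exact ⟨_, h2, n, α, hα, rfl⟩

/-- A diskcyclicity criterion: geometric scalings `c ^ n` with `‖c‖ ≤ 1` make the orbits of a
spanning set tend to zero, while suitable preimages stay small after scaling by `c⁻¹ ^ n`. -/
theorem diskCyclic_of_criterion {H : Type*} [NormedAddCommGroup H] [NormedSpace ℂ H]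
    [CompleteSpace H] [TopologicalSpace.SeparableSpace H] (T : H →L[ℂ] H)
    {c : ℂ} (hc0 : c ≠ 0) (hc : ‖c‖ ≤ 1) {E : Set H}
    (hE : Dense (Submodule.span ℂ E : Set H))
    (hfwd : ∀ u ∈ E, Tendsto (fun n : ℕ => c ^ n • (T ^ n) u) atTop (𝓝 0))
    (hbwd : ∀ v ∈ E, ∃ z : ℕ → H, (∀ n, (T ^ n) (z n) = v) ∧
      Tendsto (fun n : ℕ => c⁻¹ ^ n • z n) atTop (𝓝 0)) :
    DiskCyclic T := by
  have hfwd' : ∀ u ∈ Submodule.span ℂ E,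
      Tendsto (fun n : ℕ => c ^ n • (T ^ n) u) atTop (𝓝 0) := by
    intro u hu
    induction hu using Submodule.span_induction with
    | mem u hu => exact hfwd u hu
    | zero => simp
    | add u v _ _ hu hv => simpa using hu.add hv
    | smul a u _ hu => simpa [smul_comm a] using hu.const_smul a
  have hbwd' : ∀ v ∈ Submodule.span ℂ E, ∃ z : ℕ → H, (∀ n, (T ^ n) (z n) = v) ∧
      Tendsto (fun n : ℕ => c⁻¹ ^ n • z n) atTop (𝓝 0) := by
    intro v hv
    induction hv using Submodule.span_induction with
    | mem v hv => exact hbwd v hv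
    | zero => exact ⟨fun _ => 0, by simp, by simp⟩
    | add u v _ _ hu hv =>
      obtain ⟨y, hy, hy'⟩ := hu
      obtain ⟨z, hz, hz'⟩ := hv
      exact ⟨fun n => y n + z n, fun n => by rw [map_add, hy, hz], by simpa using hy'.add hz'⟩
    | smul a v _ hv =>
      obtain ⟨z, hz, hz'⟩ := hv
      exact ⟨fun n => a • z n, fun n => by rw [map_smul, hz],
        by simpa [smul_comm a] using hz'.const_smul a⟩
  refine diskCyclic_of_transitive T fun U V hU hUne hV hVne => ?_
  obtain ⟨u, hu, huU⟩ := hE.exists_mem_open hU hUne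
  obtain ⟨v, hv, hvV⟩ := hE.exists_mem_open hV hVne
  obtain ⟨z, hz, hz'⟩ := hbwd' v hv
  have h1 : Tendsto (fun n : ℕ => u + c⁻¹ ^ n • z n) atTop (𝓝 u) := by
    simpa using hz'.const_add u
  have h2 : Tendsto (fun n : ℕ => c ^ n • (T ^ n) u + v) atTop (𝓝 v) := by
    simpa using (hfwd' u hu).add_const v
  obtain ⟨n, hn1, hn2⟩ :=
    ((h1.eventually_mem (hU.mem_nhds huU)).and (h2.eventually_mem (hV.mem_nhds hvV))).exists
  refine ⟨_, hn1, n, c ^ n, ?_, ?_⟩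
  · rw [norm_pow]
    exact pow_le_one₀ (norm_nonneg _) hc
  · have : c ^ n • (T ^ n) (u + c⁻¹ ^ n • z n) = c ^ n • (T ^ n) u + v := by
      rw [map_add, map_smul, hz, smul_add, smul_smul, ← mul_pow, mul_inv_cancel₀ hc0, one_pow,
        one_smul]
    rwa [this]

theorem dense_span_range_lp_single :
    Dense (Submodule.span ℂ (Set.range fun m : ℤ =>
      (lp.single 2 m 1 : lp (fun _ : ℤ => ℂ) 2)) : Set (lp (fun _ : ℤ => ℂ) 2)) := by
  intro f
  refine mem_closure_of_tendsto (lp.hasSum_single (by norm_num) f)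
    (Eventually.of_forall fun s => Submodule.sum_mem _ fun m _ => ?_)
  have : lp.single 2 m (f m) = f m • (lp.single 2 m 1 : lp (fun _ : ℤ => ℂ) 2) := by
    rw [← lp.single_smul, smul_eq_mul, mul_one]
  rw [this]
  exact Submodule.smul_mem _ _ (Submodule.subset_span ⟨m, rfl⟩)

theorem separableSpace_lp_int : TopologicalSpace.SeparableSpace (lp (fun _ : ℤ => ℂ) 2) := by
  rw [← TopologicalSpace.isSeparable_univ_iff, ← dense_span_range_lp_single.closure_eq]
  exact (Set.countable_range _).isSeparable.span.closure

theorem stmt12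
    (T : lp (fun _ : ℤ => ℂ) 2 →L[ℂ] lp (fun _ : ℤ => ℂ) 2)
    (hT : ∀ (x : lp (fun _ : ℤ => ℂ) 2) (n : ℤ),
      (T x : ∀ _ : ℤ, ℂ) n =
        ((if 0 ≤ n - 1 then (2 : ℂ) else 3) * (x : ∀ _ : ℤ, ℂ) (n - 1))) :
    DiskCyclic T ∧ ¬ Hypercyclic T := by
  constructor
  · have := separableSpace_lp_int
    let e : ℤ → lp (fun _ : ℤ => ℂ) 2 := fun m => lp.single 2 m 1
    let w : ℤ → ℂ := fun m => if 0 ≤ m then 2 else 3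
    have hw : ∀ m, w m ≠ 0 := fun m => by
      simp only [w]
      split_ifs <;> norm_num
    have he : ∀ m, ‖e m‖ = 1 := fun m => by
      simp only [e]
      rw [lp.norm_single (by norm_num), norm_one]
    have hTe : ∀ m, T (e m) = w m • e (m + 1) := by
      intro m
      ext n
      rw [hT]
      simp only [e, w, lp.coeFn_smul, Pi.smul_apply, lp.single_apply, smul_eq_mul]
      by_cases h : n = m + 1
      · subst h
        simp
      · rw [Pi.single_eq_of_ne h, Pi.single_eq_of_ne (by omega)]
        simp
    have hinj : Function.Injective T := by
      rw [injective_iff_map_eq_zero]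
      intro x hx
      ext m
      have h := hT x (m + 1)
      rw [hx, add_sub_cancel_right] at h
      simpa using (mul_eq_zero.1 h.symm).resolve_left (hw m)
    refine diskCyclic_of_criterion T (c := 2 / 5) (by norm_num) (by norm_num)
      dense_span_range_lp_single ?_ ?_
    · rintro _ ⟨m, rfl⟩
      change Tendsto (fun n : ℕ => (2 / 5 : ℂ) ^ n • (T ^ n) (e m)) atTop (𝓝 0)
      have hiff : ∀ m, Tendsto (fun n : ℕ => (2 / 5 : ℂ) ^ n • (T ^ n) (e (m + 1))) atTop (𝓝 0) ↔
          Tendsto (fun n : ℕ => (2 / 5 : ℂ) ^ n • (T ^ n) (e m)) atTop (𝓝 0) := by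
        intro m
        have h1 : e (m + 1) = (w m)⁻¹ • T (e m) := by
          rw [hTe, smul_smul, inv_mul_cancel₀ (hw m), one_smul]
        constructor
        · intro h
          rw [← tendsto_add_atTop_iff_nat 1]
          have h2 := h.const_smul (2 / 5 * w m)
          rw [smul_zero] at h2
          refine h2.congr fun n => ?_
          rw [pow_succ T, mul_apply_eq_comp, hTe, map_smul, smul_smul, smul_smul]
          congr 1
          ring
        · intro h
          have h2 := (((T.continuous.tendsto _).comp h).const_smul (w m)⁻¹)
          rw [map_zero, smul_zero] at h2
          refine h2.congr fun n => ?_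
          rw [h1, map_smul, ← mul_apply_eq_comp, ← pow_succ, pow_succ',
            mul_apply_eq_comp, Function.comp_apply, map_smul, smul_comm]
      induction m using Int.induction_on with
      | zero =>
        have h0 : ∀ n : ℕ, (T ^ n) (e 0) = (2 : ℂ) ^ n • e n := by
          intro n
          induction n with
          | zero => simp
          | succ n ih =>
            rw [pow_succ', mul_apply_eq_comp, ih, map_smul, hTe, smul_smul, pow_succ]
            simp [w]
        rw [tendsto_zero_iff_norm_tendsto_zero]
        refine (tendsto_pow_atTop_nhds_zero_of_lt_one (r := (4 / 5 : ℝ))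
          (by norm_num) (by norm_num)).congr fun n => ?_
        rw [h0, smul_smul, ← mul_pow, norm_smul, he, norm_pow]
        norm_num
      | succ i ih => exact (hiff _).2 ih
      | pred i ih => exact (hiff _).1 (by simpa using ih)
    · rintro _ ⟨m, rfl⟩
      change ∃ z : ℕ → _, (∀ n, (T ^ n) (z n) = e m) ∧
        Tendsto (fun n : ℕ => (2 / 5 : ℂ)⁻¹ ^ n • z n) atTop (𝓝 0)
      induction m using Int.induction_on with
      | zero =>
        refine ⟨fun n => (1 / 3 : ℂ) ^ n • e (-n), fun n => ?_, ?_⟩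
        · induction n with
          | zero => simp
          | succ n ih =>
            rw [map_smul] at ih ⊢
            have hwn : w (-((n + 1 : ℕ) : ℤ)) = 3 := if_neg (by push_cast; omega)
            rw [pow_succ T, mul_apply_eq_comp, hTe, map_smul, hwn, smul_smul,
              pow_succ, mul_assoc, ← ih]
            norm_num
        · rw [tendsto_zero_iff_norm_tendsto_zero]
          refine (tendsto_pow_atTop_nhds_zero_of_lt_one (r := (5 / 6 : ℝ))
            (by norm_num) (by norm_num)).congr fun n => ?_
          rw [smul_smul, ← mul_pow, norm_smul, he, norm_pow]
          norm_num
      | succ i ih =>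
        obtain ⟨z, hz, hz'⟩ := ih
        refine ⟨fun n => (w i)⁻¹ • T (z n), fun n => ?_, ?_⟩
        · rw [map_smul, ← mul_apply_eq_comp, ← pow_succ, pow_succ',
            mul_apply_eq_comp, hz, hTe, smul_smul, inv_mul_cancel₀ (hw _), one_smul]
        · have h2 := (((T.continuous.tendsto _).comp hz').const_smul (w i)⁻¹)
          rw [map_zero, smul_zero] at h2
          refine h2.congr fun n => ?_
          rw [Function.comp_apply, map_smul, smul_comm]
      | pred i ih =>
        obtain ⟨z, hz, hz'⟩ := ih
        refine ⟨fun n => w (-i - 1) • z (n + 1), fun n => ?_, ?_⟩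
        · apply hinj
          rw [map_smul, map_smul, ← mul_apply_eq_comp, ← pow_succ', hz, hTe,
            sub_add_cancel]
        · have h2 := ((tendsto_add_atTop_iff_nat 1).2 hz').const_smul (2 / 5 * w (-i - 1))
          rw [smul_zero] at h2
          refine h2.congr fun n => ?_
          rw [smul_smul, smul_smul, pow_succ]
          congr 1
          field_simp
  · rintro ⟨x, hx⟩
    have hgrow : ∀ (m : ℤ) (n : ℕ), ‖x m‖ ≤ ‖(T ^ n) x‖ := by
      intro m n
      have h : ‖x m‖ ≤ ‖(T ^ n) x (m + n)‖ := by
        induction n with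
        | zero => simp
        | succ n ih =>
          refine ih.trans ?_
          rw [pow_succ', mul_apply_eq_comp, hT, norm_mul]
          push_cast
          rw [← add_assoc, add_sub_cancel_right]
          refine le_mul_of_one_le_left (norm_nonneg _) ?_
          split_ifs <;> norm_num
      exact h.trans (lp.norm_apply_le_norm (by norm_num) _ _)
    have hx0 : x = 0 := by
      ext m
      by_contra hm
      obtain ⟨_, ⟨n, rfl⟩, hn⟩ := hx.exists_mem_open Metric.isOpen_ball
        ⟨0, Metric.mem_ball_self (norm_pos_iff.2 hm)⟩
      rw [mem_ball_zero_iff] at hn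
      exact (hgrow m n).not_gt hn
    subst hx0
    obtain ⟨_, ⟨n, rfl⟩, hn⟩ := hx.exists_mem_open Metric.isOpen_ball
      ⟨(lp.single 2 0 1 : lp (fun _ : ℤ => ℂ) 2), Metric.mem_ball_self one_pos⟩
    rw [map_zero, Metric.mem_ball, dist_comm, dist_zero_right, lp.norm_single (by norm_num),
      norm_one] at hn
    exact lt_irrefl _ hn
end

section
/- If T is a bounded operator on a Hilbert space H whose spectrum σ(T) has a connected component σ contained in the open unit disk B(0,1), then T is not diskcyclic. -/
open Filter Topology Pointwise

/-- In a compact Hausdorff space, a component contained in an open set is contained in a clopen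
subset of that open set. -/
theorem exists_isClopen_of_connectedComponent_subset {X : Type*} [TopologicalSpace X] [T2Space X]
    [CompactSpace X] {x : X} {V : Set X} (hV : IsOpen V) (h : connectedComponent x ⊆ V) :
    ∃ s : Set X, IsClopen s ∧ x ∈ s ∧ s ⊆ V := by
  rw [connectedComponent_eq_iInter_isClopen] at h
  let N := {s : Set X // IsClopen s ∧ x ∈ s}
  have : Nonempty N := ⟨⟨Set.univ, isClopen_univ, Set.mem_univ x⟩⟩
  have hdir : Directed GE.ge fun s : N => s.val := by
    rintro ⟨s, hs, hxs⟩ ⟨t, ht, hxt⟩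
    exact ⟨⟨s ∩ t, hs.inter ht, ⟨hxs, hxt⟩⟩, Set.inter_subset_left, Set.inter_subset_right⟩
  obtain ⟨⟨s, hs, hxs⟩, hsV⟩ := exists_subset_nhds_of_compactSpace hdir
    (fun s : N => s.property.1.1) (fun y hy => hV.mem_nhds (h hy))
  exact ⟨s, hs, hxs, hsV⟩

/-- A component of a compact set `F` inside an open set `V` can be enclosed in an open set whose
closure lies in `V` and whose frontier misses `F`. -/
theorem exists_isOpen_frontier_disjoint_of_connectedComponentIn_subset {X : Type*}
    [TopologicalSpace X] [T4Space X] {F V : Set X} (hF : IsCompact F) {x : X} (hx : x ∈ F)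
    (hV : IsOpen V) (h : connectedComponentIn F x ⊆ V) :
    ∃ U : Set X, IsOpen U ∧ x ∈ U ∧ closure U ⊆ V ∧ Disjoint (frontier U) F := by
  have : CompactSpace F := isCompact_iff_compactSpace.mp hF
  rw [connectedComponentIn_eq_image hx, Set.image_subset_iff] at h
  obtain ⟨s, hs, hxs, hsV⟩ := exists_isClopen_of_connectedComponent_subset
    (hV.preimage continuous_subtype_val) h
  have hcl {t : Set F} (ht : IsClosed t) : IsClosed ((↑) '' t : Set X) :=
    (ht.isCompact.image continuous_subtype_val).isClosed
  obtain ⟨U, hU, hsU, hUV⟩ := normal_exists_closure_subset (hcl hs.isClosed)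
    (hV.inter (hcl hs.compl.isClosed).isOpen_compl) (by
      rintro _ ⟨y, hy, rfl⟩
      refine ⟨hsV hy, ?_⟩
      rintro ⟨z, hz, hzy⟩
      exact hz (Subtype.ext hzy ▸ hy))
  refine ⟨U, hU, hsU ⟨⟨x, hx⟩, hxs, rfl⟩, fun y hy => (hUV hy).1,
    Set.disjoint_left.mpr fun y hyU hyF => ?_⟩
  rw [hU.frontier_eq] at hyU
  by_cases hys : (⟨y, hyF⟩ : F) ∈ s
  · exact hyU.2 (hsU ⟨_, hys, rfl⟩)
  · exact (hUV hyU.1).2 ⟨_, hys, rfl⟩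

section Banach

variable {E : Type*} [NormedAddCommGroup E] [NormedSpace ℂ E]

/-- The vector-valued polynomial `(zⁿ - Tⁿ)(z - T)⁻¹ x` is entire. -/
theorem exists_differentiable_smul_sub_eq_pow_sub_pow (T : E →L[ℂ] E) (x : E) (n : ℕ) :
    ∃ q : ℂ → E, Differentiable ℂ q ∧ ∀ z, z • q z - T (q z) = z ^ n • x - (T ^ n) x := by
  induction n with
  | zero => exact ⟨0, differentiable_const 0, by simp⟩
  | succ n ih =>
    obtain ⟨q, hq, h⟩ := ih
    refine ⟨fun z => z ^ n • x + T (q z), by fun_prop, fun z => ?_⟩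
    have hz := congrArg T (h z)
    simp only [map_sub, map_smul] at hz
    rw [pow_succ' T, mul_apply_eq_comp, map_add, map_smul, smul_add, smul_smul,
      ← pow_succ', add_sub_add_comm, hz]
    abel

/-- For a diskcyclic operator, the equation `(z - T) q(z) = u` has entire approximate solutions,
uniformly on the closed unit disk. -/
theorem DiskCyclic.exists_differentiable_approx {T : E →L[ℂ] E} (hT : DiskCyclic T) (u : E)
    {ε : ℝ} (hε : 0 < ε) :
    ∃ q : ℂ → E, Differentiable ℂ q ∧ ∀ z : ℂ, ‖z‖ ≤ 1 → ‖z • q z - T (q z) - u‖ ≤ ε := by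
  obtain ⟨x, hx⟩ := hT
  set s : ℝ := (‖x‖ + 1) / ε with hs
  have hs0 : 0 < s := by positivity
  obtain ⟨_, ⟨n, α, hα, rfl⟩, hy⟩ := hx.exists_dist_lt ((s : ℂ) • u) one_pos
  obtain ⟨q, hq, h⟩ := exists_differentiable_smul_sub_eq_pow_sub_pow T x n
  have hsc : (s : ℂ) ≠ 0 := by exact_mod_cast hs0.ne'
  refine ⟨fun z => (-(s : ℂ)⁻¹ * α) • q z, by fun_prop, fun z hz => ?_⟩
  have key : z • (-(s : ℂ)⁻¹ * α) • q z - T ((-(s : ℂ)⁻¹ * α) • q z) - u =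
      (s : ℂ)⁻¹ • (-(α • z ^ n • x) - ((s : ℂ) • u - α • (T ^ n) x)) := by
    rw [map_smul, smul_comm z, ← smul_sub, h z]
    simp only [smul_sub, smul_neg, smul_smul, inv_mul_cancel₀ hsc, one_smul, neg_mul, neg_smul,
      mul_assoc]
    abel
  have h1 : ‖α • z ^ n • x‖ ≤ ‖x‖ := by
    rw [norm_smul, norm_smul, norm_pow, ← mul_assoc]
    exact mul_le_of_le_one_left (norm_nonneg x)
      (mul_le_one₀ hα (by positivity) (pow_le_one₀ (norm_nonneg z) hz))
  rw [dist_eq_norm] at hy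
  rw [key, norm_smul, norm_inv, Complex.norm_real, Real.norm_of_nonneg hs0.le]
  calc s⁻¹ * ‖-(α • z ^ n • x) - ((s : ℂ) • u - α • (T ^ n) x)‖
      ≤ s⁻¹ * (‖x‖ + 1) := by
        gcongr
        refine (norm_sub_le _ _).trans ?_
        rw [norm_neg]
        exact add_le_add h1 hy.le
    _ = ε := by
        rw [hs]
        field_simp

/-- The operators `z - T` are uniformly bounded below on compact subsets of the resolvent set. -/
theorem exists_norm_le_mul_norm_smul_sub [CompleteSpace E] (T : E →L[ℂ] E) {K : Set ℂ}
    (hK : IsCompact K) (hKT : Disjoint K (spectrum ℂ T)) :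
    ∃ C : ℝ, 0 ≤ C ∧ ∀ z ∈ K, ∀ v, ‖v‖ ≤ C * ‖z • v - T v‖ := by
  have hres : K ⊆ resolventSet ℂ T := fun z hz =>
    not_not.mp (Set.disjoint_left.mp hKT hz)
  have hcont : ContinuousOn (resolvent T) K := fun z hz =>
    (spectrum.hasDerivAt_resolvent_const_left (hres hz)).continuousAt.continuousWithinAt
  obtain ⟨C, hC⟩ := hK.exists_bound_of_continuousOn hcont
  refine ⟨max C 0, le_max_right _ _, fun z hz v => ?_⟩
  have hinv : resolvent T z * (algebraMap ℂ (E →L[ℂ] E) z - T) = 1 :=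
    Ring.inverse_mul_cancel _ (hres hz)
  have hv : resolvent T z (z • v - T v) = v := by
    simpa [Algebra.algebraMap_eq_smul_one] using congrArg (fun S : E →L[ℂ] E => S v) hinv
  calc ‖v‖ = ‖resolvent T z (z • v - T v)‖ := by rw [hv]
    _ ≤ ‖resolvent T z‖ * ‖z • v - T v‖ := ContinuousLinearMap.le_opNorm _ _
    _ ≤ max C 0 * ‖z • v - T v‖ := by
      gcongr
      exact (hC z hz).trans (le_max_left _ _)

/-- For a diskcyclic `T`, the lower bound on `z - T` on the frontier of a subset of the unit disk
persists in the interior. -/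
theorem DiskCyclic.norm_le_mul_norm_smul_sub {T : E →L[ℂ] E} (hT : DiskCyclic T) {U : Set ℂ}
    (hU : closure U ⊆ Metric.ball 0 1) {C : ℝ} (hC0 : 0 ≤ C)
    (hC : ∀ z ∈ frontier U, ∀ v, ‖v‖ ≤ C * ‖z • v - T v‖) {w : ℂ} (hw : w ∈ U) (v : E) :
    ‖v‖ ≤ C * ‖w • v - T v‖ := by
  have hball {z : ℂ} (hz : z ∈ closure U) : ‖z‖ ≤ 1 := (mem_ball_zero_iff.mp (hU hz)).le
  refine le_of_forall_pos_le_add fun δ hδ => ?_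
  obtain ⟨q, hq, h⟩ := hT.exists_differentiable_approx v (ε := δ / (2 * (C + 1))) (by positivity)
  have hd : Differentiable ℂ fun z => v - (z - w) • q z := by fun_prop
  have hmax := Complex.norm_le_of_forall_mem_frontier_norm_le
    (Metric.isBounded_ball.subset (subset_closure.trans hU)) hd.diffContOnCl
    (C := C * ‖w • v - T v‖ + δ) (fun z hz => ?_) (subset_closure hw)
  · simpa using hmax
  have hzU := frontier_subset_closure hz
  have hzw : ‖z - w‖ ≤ 2 := by
    linarith [norm_sub_le z w, hball hzU, hball (subset_closure hw)]
  have key : z • (v - (z - w) • q z) - T (v - (z - w) • q z) =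
      (w • v - T v) - (z - w) • (z • q z - T (q z) - v) := by
    rw [map_sub, map_smul]
    module
  calc ‖v - (z - w) • q z‖
      ≤ C * ‖(w • v - T v) - (z - w) • (z • q z - T (q z) - v)‖ := key ▸ hC z hz _
    _ ≤ C * (‖w • v - T v‖ + 2 * (δ / (2 * (C + 1)))) := by
        gcongr
        refine (norm_sub_le _ _).trans ?_
        rw [norm_smul]
        gcongr
        exact h z (hball hzU)
    _ = C * ‖w • v - T v‖ + C / (C + 1) * δ := by
        field_simp
    _ ≤ C * ‖w • v - T v‖ + δ := by
        gcongr
        exact mul_le_of_le_one_left hδ.le ((div_le_one (by positivity)).mpr (by linarith))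

/-- If the spectrum of an operator on a Banach space has a component inside the open unit disk,
the operator is not diskcyclic. -/
theorem not_diskCyclic_of_connectedComponentIn_spectrum_subset_ball [CompleteSpace E]
    (T : E →L[ℂ] E) {w : ℂ} (hw : w ∈ spectrum ℂ T)
    (h : connectedComponentIn (spectrum ℂ T) w ⊆ Metric.ball (0 : ℂ) 1) : ¬ DiskCyclic T := by
  intro hT
  obtain ⟨U, -, hwU, hUB, hUT⟩ := exists_isOpen_frontier_disjoint_of_connectedComponentIn_subset
    (spectrum.isCompact T) hw Metric.isOpen_ball h
  have hK : IsCompact (frontier U) := Metric.isCompact_of_isClosed_isBounded isClosed_frontier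
    (Metric.isBounded_ball.subset (frontier_subset_closure.trans hUB))
  obtain ⟨C, hC0, hC⟩ := exists_norm_le_mul_norm_smul_sub T hK hUT
  have happly (v : E) : (algebraMap ℂ (E →L[ℂ] E) w - T) v = w • v - T v := by
    simp [Algebra.algebraMap_eq_smul_one]
  refine hw (ContinuousLinearMap.isUnit_iff_bijective.mpr
    ((ContinuousLinearMap.bijective_iff_dense_range_and_antilipschitz _).mpr ⟨?_, C.toNNReal, ?_⟩))
  · rw [← Submodule.dense_iff_topologicalClosure_eq_top]
    refine Metric.dense_iff.mpr fun u r hr => ?_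
    obtain ⟨q, -, hq⟩ := hT.exists_differentiable_approx u (half_pos hr)
    refine ⟨_, ?_, q w, rfl⟩
    have := hq w (mem_ball_zero_iff.mp (hUB (subset_closure hwU))).le
    rw [mem_ball_iff_norm]
    change ‖(algebraMap ℂ (E →L[ℂ] E) w - T) (q w) - u‖ < r
    rw [happly]
    linarith
  · refine ContinuousLinearMap.antilipschitz_of_bound _ fun v => ?_
    rw [happly, Real.coe_toNNReal _ hC0]
    exact hT.norm_le_mul_norm_smul_sub hUB hC0 hC hwU v

end Banach

theorem stmt15 {H : Type*} [NormedAddCommGroup H] [InnerProductSpace ℂ H] [CompleteSpace H]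
    (T : H →L[ℂ] H)
    (h : ∃ z ∈ spectrum ℂ T, connectedComponentIn (spectrum ℂ T) z ⊆ Metric.ball (0 : ℂ) 1) :
    ¬ DiskCyclic T := by
  obtain ⟨z, hz, hsub⟩ := h
  exact not_diskCyclic_of_connectedComponentIn_spectrum_subset_ball T hz hsub
end

section
/- The operator T : ℂ → ℂ given by T(x) = 2x is diskcyclic on ℂ (with diskcyclic vector 1), while its inverse T⁻¹(x) = x/2 is not diskcyclic. Consequently, a diskcyclic operator exists on a nontrivial complex Hilbert space H if and only if dim H = 1 or dim H = ∞. -/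
open Filter Topology Pointwise

/-- The orbit of a complex number under an affine map is never dense. -/
theorem not_denseRange_of_affine_recurrence {r : ℕ → ℂ} {l m : ℂ}
    (h : ∀ n, r (n + 1) = l * r n + m) : ¬ DenseRange r := by
  intro hd
  have key : ∀ K : Set ℂ, IsClosed K → (∀ n, r n ∈ K) → ∀ z, z ∈ K := fun K hK hr z ↦
    closure_minimal (Set.range_subset_iff.2 hr) hK (hd z)
  by_cases hl : l = 1
  · subst hl
    have hr : ∀ n, r n = r 0 + n * m := by
      intro n
      induction n with
      | zero => simp
      | succ n ih => rw [h, ih]; push_cast; ring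
    have hm : m = 0 := by
      have h1 := key {z | 0 ≤ ((z - r 0) * (starRingEnd ℂ) m).re}
        (isClosed_le continuous_const (by fun_prop)) (fun n ↦ by
          rw [Set.mem_ofPred_eq, hr n, add_sub_cancel_left, mul_assoc, Complex.mul_conj]
          norm_cast
          exact mul_nonneg n.cast_nonneg (Complex.normSq_nonneg m)) (r 0 - m)
      rw [Set.mem_ofPred_eq, sub_sub_cancel_left, neg_mul, Complex.mul_conj, Complex.neg_re,
        Complex.ofReal_re] at h1
      exact Complex.normSq_eq_zero.1 (le_antisymm (by linarith) (Complex.normSq_nonneg m))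
    have h2 := key {r 0} isClosed_singleton (fun n ↦ by simp [hr n, hm]) (r 0 + 1)
    simp at h2
  · have hl' : 1 - l ≠ 0 := sub_ne_zero.2 (Ne.symm hl)
    obtain ⟨p, hp⟩ : ∃ p, p = l * p + m := ⟨m / (1 - l), by field_simp; ring⟩
    have hr : ∀ n, ‖r n - p‖ = ‖l‖ ^ n * ‖r 0 - p‖ := by
      intro n
      induction n with
      | zero => simp
      | succ n ih =>
        have : r (n + 1) - p = l * (r n - p) := by rw [h]; linear_combination -hp
        rw [this, norm_mul, ih]; ring
    by_cases hb : ‖l‖ ≤ 1 ∨ r 0 = p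
    · have h1 := key {z | ‖z - p‖ ≤ ‖r 0 - p‖} (isClosed_le (by fun_prop) continuous_const)
        (fun n ↦ by
          rw [Set.mem_ofPred_eq, hr n]
          rcases hb with hb | hb
          · exact mul_le_of_le_one_left (norm_nonneg _) (pow_le_one₀ (norm_nonneg _) hb)
          · simp [hb]) (p + (‖r 0 - p‖ + 1 : ℝ))
      rw [Set.mem_ofPred_eq, add_sub_cancel_left, Complex.norm_real, Real.norm_eq_abs,
        abs_of_nonneg (by positivity)] at h1
      linarith
    · push Not at hb
      have h1 := key {z | ‖r 0 - p‖ ≤ ‖z - p‖} (isClosed_le continuous_const (by fun_prop))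
        (fun n ↦ by
          rw [Set.mem_ofPred_eq, hr n]
          exact le_mul_of_one_le_left (norm_nonneg _) (one_le_pow₀ hb.1.le)) p
      rw [Set.mem_ofPred_eq, sub_self, norm_zero, norm_le_zero_iff, sub_eq_zero] at h1
      exact hb.2 h1

/-- An operator whose transpose is triangular on two independent functionals is not
diskcyclic. -/
theorem not_diskCyclic_of_triangular {E : Type*} [NormedAddCommGroup E] [NormedSpace ℂ E]
    {T : E →L[ℂ] E} {f g : E →L[ℂ] ℂ} {a b c : ℂ} (hf : ∀ x, f (T x) = a * f x)
    (hg : ∀ x, g (T x) = b * g x + c * f x) (hs : ∀ r : ℂ, ∃ z, f z ≠ 0 ∧ g z / f z = r) :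
    ¬ DiskCyclic T := by
  rintro ⟨x, hx⟩
  have hsucc : ∀ n, (T ^ (n + 1)) x = T ((T ^ n) x) := fun n ↦ by
    rw [pow_succ', mul_apply_eq_comp]
  have hfn : ∀ n, f ((T ^ n) x) = a ^ n * f x := by
    intro n
    induction n with
    | zero => simp
    | succ n ih => rw [hsucc, hf, ih]; ring
  have hq : DenseRange fun n ↦ g ((T ^ n) x) / f ((T ^ n) x) := by
    rw [DenseRange, dense_iff_inter_open]
    rintro U hU ⟨r, hr⟩
    obtain ⟨z, hz, rfl⟩ := hs r
    have hcont : ContinuousAt (fun y ↦ g y / f y) z :=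
      g.continuous.continuousAt.div f.continuous.continuousAt hz
    obtain ⟨y, ⟨hyU, hyf⟩, n, α, -, rfl⟩ := mem_closure_iff_nhds.1 (hx z) _
      (inter_mem (hcont.preimage_mem_nhds (hU.mem_nhds hr))
        (f.continuous.continuousAt.preimage_mem_nhds (isOpen_ne.mem_nhds hz)))
    refine ⟨_, ?_, n, rfl⟩
    have hα : α ≠ 0 := by rintro rfl; simp at hyf
    simpa [mul_div_mul_left _ _ hα] using hyU
  by_cases ha : a = 0 ∨ f x = 0
  · refine not_denseRange_of_affine_recurrence (l := 0) (m := 0) (fun n ↦ ?_) hq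
    have h0 : f ((T ^ (n + 1)) x) = 0 := by
      rw [hfn]
      rcases ha with ha | ha <;> simp [ha]
    rw [h0, div_zero, zero_mul, zero_add]
  · push Not at ha
    refine not_denseRange_of_affine_recurrence (l := b / a) (m := c / a) (fun n ↦ ?_) hq
    have h0 : f ((T ^ n) x) ≠ 0 := by
      rw [hfn]; exact mul_ne_zero (pow_ne_zero _ ha.1) ha.2
    have := ha.1
    simp only [hsucc, hf, hg]
    field_simp

/-- There are no diskcyclic operators in finite dimension greater than one. -/
theorem not_diskCyclic_of_one_lt_finrank {E : Type*} [NormedAddCommGroup E]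
    [InnerProductSpace ℂ E] [FiniteDimensional ℂ E] (hE : 1 < Module.finrank ℂ E)
    (T : E →L[ℂ] E) : ¬ DiskCyclic T := by
  have : CompleteSpace E := FiniteDimensional.complete ℂ E
  have : Nontrivial E := Module.nontrivial_of_finrank_pos (R := ℂ) (by omega)
  let A : E →L[ℂ] E := ContinuousLinearMap.adjoint T
  obtain ⟨a, ha⟩ := Module.End.exists_eigenvalue (A : Module.End ℂ E)
  obtain ⟨u, hu⟩ := ha.exists_hasEigenvector
  have hu0 : u ≠ 0 := hu.2
  have hAu : A u = a • u := hu.apply_eq_smul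
  let W : Submodule ℂ E := (ℂ ∙ u)ᗮ
  have hW : Nontrivial W := by
    refine Module.nontrivial_of_finrank_pos (R := ℂ) ?_
    have h1 := Submodule.finrank_add_finrank_orthogonal (ℂ ∙ u)
    rw [finrank_span_singleton hu0] at h1
    change 0 < Module.finrank ℂ (ℂ ∙ u)ᗮ
    omega
  let C : W →L[ℂ] W := W.orthogonalProjectionOnto ∘L A ∘L W.subtypeL
  obtain ⟨b, hb⟩ := Module.End.exists_eigenvalue (C : Module.End ℂ W)
  obtain ⟨v, hv⟩ := hb.exists_hasEigenvector
  have hv0 : (v : E) ≠ 0 := fun h ↦ hv.2 (Subtype.ext h)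
  have hCv : W.orthogonalProjectionOnto (A v) = b • v := hv.apply_eq_smul
  have huv : inner ℂ u (v : E) = 0 := Submodule.mem_orthogonal_singleton_iff_inner_right.1 v.2
  have hvu : inner ℂ (v : E) u = 0 := Submodule.mem_orthogonal_singleton_iff_inner_left.1 v.2
  obtain ⟨c, hc⟩ : ∃ c : ℂ, c • u = A v - b • (v : E) := by
    have h1 : A v - W.orthogonalProjectionOnto (A v) ∈ Wᗮ :=
      W.sub_starProjection_mem_orthogonal (A v)
    rw [Submodule.orthogonal_orthogonal, hCv] at h1
    exact Submodule.mem_span_singleton.1 h1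
  have hAv : A v = b • (v : E) + c • u := by rw [hc]; abel
  refine not_diskCyclic_of_triangular (f := innerSL ℂ u) (g := innerSL ℂ (v : E))
    (a := starRingEnd ℂ a) (b := starRingEnd ℂ b) (c := starRingEnd ℂ c) (fun x ↦ ?_)
    (fun x ↦ ?_) (fun r ↦ ?_)
  · rw [innerSL_apply_apply, innerSL_apply_apply, ← ContinuousLinearMap.adjoint_inner_left]
    change inner ℂ (A u) x = _
    rw [hAu, inner_smul_left]
  · rw [innerSL_apply_apply, innerSL_apply_apply, innerSL_apply_apply,
      ← ContinuousLinearMap.adjoint_inner_left]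
    change inner ℂ (A v) x = _
    rw [hAv, inner_add_left, inner_smul_left, inner_smul_left]
  · have h1 : inner ℂ u u ≠ 0 := inner_self_ne_zero.2 hu0
    have h2 : inner ℂ (v : E) (v : E) ≠ 0 := inner_self_ne_zero.2 hv0
    refine ⟨u + (r * inner ℂ u u / inner ℂ (v : E) (v : E)) • (v : E), ?_, ?_⟩ <;>
      simp only [innerSL_apply_apply, inner_add_right, inner_smul_right, huv, hvu, mul_zero,
        add_zero, zero_add]
    · exact h1
    · field_simp

/-- The backward-shift form of the hypercyclicity criterion: an operator with a right inverse of
norm less than one and densely many vectors killed by some power has a dense orbit. -/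
theorem exists_dense_orbit_of_rightInverse {E : Type*} [NormedAddCommGroup E] [NormedSpace ℂ E]
    [CompleteSpace E] [TopologicalSpace.SeparableSpace E] {T R : E →L[ℂ] E} (hTR : T * R = 1)
    (hR : ‖R‖ < 1) (hker : Dense {y | ∃ N, (T ^ N) y = 0}) :
    ∃ x, Dense (Set.range fun n ↦ (T ^ n) x) := by
  have : SecondCountableTopology E := UniformSpace.secondCountable_of_separable E
  have hTRn : ∀ n, T ^ n * R ^ n = 1 := by
    intro n
    induction n with
    | zero => simp
    | succ n ih =>
      rw [pow_succ, pow_succ', mul_assoc, ← mul_assoc T, hTR, one_mul, ih]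
  let B := TopologicalSpace.countableBasis E
  have hBc : Countable B := (TopologicalSpace.countable_countableBasis E).to_subtype
  have hB := TopologicalSpace.isBasis_countableBasis E
  have hdense : Dense (⋂ U : B, ⋃ n : ℕ, (T ^ n) ⁻¹' (U : Set E)) := by
    refine dense_iInter_of_isOpen
      (fun U ↦ isOpen_iUnion fun n ↦ (hB.isOpen U.2).preimage (T ^ n).continuous) fun U ↦ ?_
    rw [dense_iff_inter_open]
    intro V hV hVne
    obtain ⟨y, hyV, N, hy⟩ := hker.inter_open_nonempty V hV hVne
    obtain ⟨z, hz⟩ := TopologicalSpace.nonempty_of_mem_countableBasis U.2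
    have hlim : Tendsto (fun n ↦ y + (R ^ n) z) atTop (𝓝 y) := by
      have h1 : Tendsto (fun n ↦ R ^ n) atTop (𝓝 0) := tendsto_pow_atTop_nhds_zero_of_norm_lt_one hR
      have h2 : Tendsto (fun n ↦ (R ^ n) z) atTop (𝓝 0) :=
        ((ContinuousLinearMap.apply ℂ E z).continuous.tendsto' 0 0 (by simp)).comp h1
      simpa using h2.const_add y
    obtain ⟨n, hnV, hnN⟩ := ((hlim.eventually (hV.mem_nhds hyV)).and (eventually_ge_atTop N)).exists
    refine ⟨_, hnV, Set.mem_iUnion.2 ⟨n, ?_⟩⟩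
    have h3 : (T ^ n) y = 0 := by
      rw [← Nat.sub_add_cancel hnN, pow_add, mul_apply_eq_comp, hy, map_zero]
    have h4 : (T ^ n) ((R ^ n) z) = z := by
      rw [← mul_apply_eq_comp, hTRn, one_apply_eq_self]
    rw [Set.mem_preimage, map_add, h3, h4, zero_add]
    exact hz
  obtain ⟨x, hx⟩ := hdense.nonempty
  refine ⟨x, hB.dense_iff.2 fun U hU _ ↦ ?_⟩
  obtain ⟨n, hn⟩ := Set.mem_iUnion.1 (Set.mem_iInter.1 hx ⟨U, hU⟩)
  exact ⟨_, hn, n, rfl⟩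

/-- A separable Hilbert space with a Hilbert basis carrying a shift of the index set supports a
diskcyclic operator, namely twice the corresponding backward shift. -/
theorem HilbertBasis.exists_diskCyclic {ι E : Type*} [NormedAddCommGroup E]
    [InnerProductSpace ℂ E] [CompleteSpace E] [TopologicalSpace.SeparableSpace E]
    (b : HilbertBasis ι ℂ E) {σ : ι → ι} (hσ : Function.Injective σ)
    (hσn : ∀ i, ∃ n, i ∉ Set.range σ^[n]) : ∃ T : E →L[ℂ] E, DiskCyclic T := by
  classical
  have ho : Orthonormal ℂ (b ∘ σ) := b.orthonormal.comp σ hσ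
  let S : E →ₗᵢ[ℂ] E :=
    ho.orthogonalFamily.linearIsometry.comp b.repr.toLinearIsometry
  have hSb : ∀ i, S (b i) = b (σ i) := fun i ↦ by
    have h := ho.orthogonalFamily.linearIsometry_apply_single (i := i) (1 : ℂ)
    rw [← b.repr_self] at h
    exact h.trans (one_smul ℂ _)
  let V : E →L[ℂ] E := S.toContinuousLinearMap
  let B : E →L[ℂ] E := ContinuousLinearMap.adjoint V
  have hBV : B * V = 1 := V.norm_map_iff_adjoint_comp_self.1 S.norm_map
  have hVn : ∀ n j, (V ^ n) (b j) = b (σ^[n] j) := by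
    intro n
    induction n with
    | zero => simp
    | succ n ih =>
      intro j
      rw [pow_succ, mul_apply_eq_comp, Function.iterate_succ_apply, ← ih]
      exact congrArg _ (hSb j)
  have hadj : ∀ n x y, inner ℂ x ((B ^ n) y) = inner ℂ ((V ^ n) x) y := by
    intro n
    induction n with
    | zero => simp
    | succ n ih =>
      intro x y
      rw [pow_succ' B, pow_succ V, mul_apply_eq_comp, mul_apply_eq_comp, ← ih,
        ContinuousLinearMap.adjoint_inner_right]
  have hBn : ∀ n i, i ∉ Set.range σ^[n] → (B ^ n) (b i) = 0 := by
    intro n i hi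
    refine b.repr.map_eq_zero_iff.1 (lp.ext (funext fun j ↦ ?_))
    rw [b.repr_apply_apply, hadj, hVn]
    exact b.orthonormal.2 fun h ↦ hi ⟨j, h⟩
  have hker : ∀ y ∈ Submodule.span ℂ (Set.range b), ∃ N, (((2 : ℂ) • B) ^ N) y = 0 := by
    have hmono : ∀ {y} {N M : ℕ}, (((2 : ℂ) • B) ^ N) y = 0 → N ≤ M →
        (((2 : ℂ) • B) ^ M) y = 0 := fun {y N M} h hNM ↦ by
      rw [← Nat.sub_add_cancel hNM, pow_add, mul_apply_eq_comp, h, map_zero]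
    intro y hy
    induction hy using Submodule.span_induction with
    | mem y hy =>
      obtain ⟨i, rfl⟩ := hy
      obtain ⟨n, hn⟩ := hσn i
      exact ⟨n, by rw [smul_pow, smul_apply, hBn n i hn, smul_zero]⟩
    | zero => exact ⟨0, by simp⟩
    | add y z _ _ hy hz =>
      obtain ⟨N, hN⟩ := hy
      obtain ⟨M, hM⟩ := hz
      exact ⟨max N M, by
        rw [map_add, hmono hN (le_max_left _ _), hmono hM (le_max_right _ _), add_zero]⟩
    | smul c y _ hy =>
      obtain ⟨N, hN⟩ := hy
      exact ⟨N, by rw [map_smul, hN, smul_zero]⟩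
  obtain ⟨x, hx⟩ := exists_dense_orbit_of_rightInverse (T := (2 : ℂ) • B) (R := (2 : ℂ)⁻¹ • V)
    (by rw [smul_mul_smul_comm, hBV]; norm_num)
    (by
      rw [norm_smul]
      have : ‖V‖ ≤ 1 := S.norm_toContinuousLinearMap_le
      norm_num
      linarith)
    ((Submodule.dense_iff_topologicalClosure_eq_top.2 b.dense_span).mono hker)
  refine ⟨(2 : ℂ) • B, x, hx.mono ?_⟩
  rintro _ ⟨n, rfl⟩
  exact ⟨n, 1, by simp, by simp⟩

/-- Every infinite-dimensional separable Hilbert space supports a diskcyclic operator. -/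
theorem exists_diskCyclic_of_not_finiteDimensional {E : Type*} [NormedAddCommGroup E]
    [InnerProductSpace ℂ E] [CompleteSpace E] [TopologicalSpace.SeparableSpace E]
    (hE : ¬ FiniteDimensional ℂ E) : ∃ T : E →L[ℂ] E, DiskCyclic T := by
  obtain ⟨w, b, -⟩ := exists_hilbertBasis ℂ E
  have hw : Infinite w := by
    by_contra hfin
    rw [not_infinite_iff_finite] at hfin
    have : FiniteDimensional ℂ (Submodule.span ℂ (Set.range b)) :=
      FiniteDimensional.span_of_finite ℂ (Set.finite_range b)
    have h := b.dense_span
    rw [(Submodule.closed_of_finiteDimensional _).submodule_topologicalClosure_eq] at h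
    exact hE (Module.finite_def.2 ((Submodule.fg_iff_finiteDimensional _).2 (h ▸ this)))
  obtain ⟨e⟩ : Nonempty (w × ℕ ≃ w) := by
    rw [← Cardinal.eq]
    simp
  let s : w × ℕ → w × ℕ := Prod.map id fun k ↦ k + 1
  have hs : Function.Injective s :=
    Function.injective_id.prodMap fun k l h ↦ by simpa using h
  have hiter : ∀ n j, (e.symm ((e ∘ s ∘ e.symm)^[n] j)).2 = (e.symm j).2 + n := by
    intro n
    induction n with
    | zero => simp
    | succ n ih =>
      intro j
      rw [Function.iterate_succ_apply, ih]
      simp [s]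
      ring
  refine b.exists_diskCyclic (σ := e ∘ s ∘ e.symm)
    (e.injective.comp (hs.comp e.symm.injective)) fun i ↦ ⟨(e.symm i).2 + 1, ?_⟩
  rintro ⟨j, hj⟩
  have h := hiter ((e.symm i).2 + 1) j
  rw [hj] at h
  omega

/-- In a one-dimensional space, doubling has a dense disk orbit at each nonzero vector. -/
theorem dense_diskOrbit_two_smul {E : Type*} [NormedAddCommGroup E] [NormedSpace ℂ E] {x : E}
    (hx : ∀ y, ∃ c : ℂ, c • x = y) :
    Dense (diskOrbit ((2 : ℂ) • ContinuousLinearMap.id ℂ E) x) := by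
  intro y
  apply subset_closure
  obtain ⟨c, rfl⟩ := hx y
  obtain ⟨n, hn⟩ := pow_unbounded_of_one_lt ‖c‖ (one_lt_two (α := ℝ))
  refine ⟨n, c / 2 ^ n, ?_, ?_⟩
  · rw [norm_div, norm_pow, Complex.norm_two]
    exact div_le_one_of_le₀ hn.le (by positivity)
  · have : ((2 : ℂ) • ContinuousLinearMap.id ℂ E) ^ n = (2 : ℂ) ^ n • 1 := by
      rw [smul_pow]; exact congrArg _ (one_pow n)
    simp [this, smul_smul]

/-- Halving is not diskcyclic on `ℂ`, since its disk orbits are bounded. -/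
theorem not_diskCyclic_half : ¬ DiskCyclic ((2 : ℂ)⁻¹ • ContinuousLinearMap.id ℂ ℂ) := by
  rintro ⟨x, hx⟩
  have hsub : diskOrbit ((2 : ℂ)⁻¹ • ContinuousLinearMap.id ℂ ℂ) x ⊆ Metric.closedBall 0 ‖x‖ := by
    rintro _ ⟨n, α, hα, rfl⟩
    have : ((2 : ℂ)⁻¹ • ContinuousLinearMap.id ℂ ℂ) ^ n = (2 : ℂ)⁻¹ ^ n • 1 := by
      rw [smul_pow]; exact congrArg _ (one_pow n)
    rw [mem_closedBall_zero_iff, this, smul_apply,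
      one_apply_eq_self, norm_smul, norm_smul, norm_pow, ← mul_assoc]
    refine mul_le_of_le_one_left (norm_nonneg _) (mul_le_one₀ hα (by positivity) ?_)
    exact pow_le_one₀ (norm_nonneg _) (by norm_num)
  have h := closure_minimal hsub Metric.isClosed_closedBall (hx ((‖x‖ + 1 : ℝ) : ℂ))
  rw [mem_closedBall_zero_iff, Complex.norm_real, Real.norm_eq_abs,
    abs_of_nonneg (by positivity)] at h
  linarith

theorem stmt18 :
    Dense (diskOrbit ((2 : ℂ) • ContinuousLinearMap.id ℂ ℂ) 1) ∧
    ¬ DiskCyclic ((2 : ℂ)⁻¹ • ContinuousLinearMap.id ℂ ℂ) ∧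
    ∀ (H : Type) [NormedAddCommGroup H] [InnerProductSpace ℂ H] [CompleteSpace H]
      [TopologicalSpace.SeparableSpace H] [Nontrivial H],
      (∃ T : H →L[ℂ] H, DiskCyclic T) ↔
        (Module.rank ℂ H = 1 ∨ ¬ FiniteDimensional ℂ H) := by
  refine ⟨dense_diskOrbit_two_smul fun y ↦ ⟨y, by simp⟩, not_diskCyclic_half, ?_⟩
  intro H _ _ _ _ _
  constructor
  · rintro ⟨T, hT⟩
    by_contra! h
    obtain ⟨h1, _⟩ := h
    rw [Ne, Module.rank_eq_one_iff_finrank_eq_one] at h1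
    have := Module.finrank_pos (R := ℂ) (M := H)
    exact not_diskCyclic_of_one_lt_finrank (by omega) T hT
  · rintro (h | h)
    · obtain ⟨x, hx⟩ := exists_ne (0 : H)
      exact ⟨_, x, dense_diskOrbit_two_smul
        (exists_smul_eq_of_finrank_eq_one (Module.rank_eq_one_iff_finrank_eq_one.1 h) hx)⟩
    · exact exists_diskCyclic_of_not_finiteDimensional h
end
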